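/- arXiv:1210.4939 — 2 statements merged into one kernel-verified Lean document; each statement's English description precedes it below -/
import Mathlib

section
/- Let K^{BTBM}_t(x) = 2∫₀^∞ (2πs)^{−d/2} e^{−|x|²/(2s)} (2πt)^{−1/2} e^{−s²/(2t)} ds. Then for d = 1, 2, 3 there exists a constant C = C(d) ∈ (0, ∞) such that ∫_{ℝ^d} [K^{BTBM}_t(x)]² dx = C t^{−d/4} for all t > 0. -/
open Real MeasureTheory Set

noncomputable def heatK (d : ℕ) (s : ℝ) (x : EuclideanSpace ℝ (Fin d)) : ℝ :=
  (2 * π * s) ^ (-(d : ℝ)/2) * Real.exp (-‖x‖^2 / (2*s))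

noncomputable def btbmK (d : ℕ) (t : ℝ) (x : EuclideanSpace ℝ (Fin d)) : ℝ :=
  2 * ∫ s in Ioi (0:ℝ),
      heatK d s x * ((2 * π * t) ^ (-(1:ℝ)/2) * Real.exp (-s^2 / (2*t)))

lemma btbmK_scale (d : ℕ) (a : ℝ) (ha : 0 < a) (x : EuclideanSpace ℝ (Fin d)) :
    btbmK d (a ^ 4) x = (a ^ d)⁻¹ * btbmK d 1 (a⁻¹ • x) := by
  unfold btbmK
  have h := integral_comp_mul_left_Ioi' (fun s => heatK d s x *
    ((2 * π * a ^ 4) ^ (-(1:ℝ)/2) * Real.exp (-s^2 / (2*a ^ 4)))) 0 (b := a ^ 2) (by positivity)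
  rw [mul_zero] at h
  rw [← h, smul_eq_mul, mul_left_comm _ (2:ℝ)]
  congr 1
  rw [← integral_const_mul, ← integral_const_mul]
  refine setIntegral_congr_fun measurableSet_Ioi fun s hs => ?_
  have hs : 0 < s := hs
  simp only [heatK]
  have e1 : (2 * π * (a ^ 2 * s)) ^ (-(d:ℝ)/2) = (a ^ d)⁻¹ * (2 * π * s) ^ (-(d:ℝ)/2) := by
    rw [show 2 * π * (a ^ 2 * s) = a ^ 2 * (2 * π * s) by ring,
      Real.mul_rpow (by positivity) (by positivity)]
    congr 1
    rw [← Real.rpow_natCast a 2, ← Real.rpow_mul ha.le, ← Real.rpow_natCast a d,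
      ← Real.rpow_neg ha.le]
    congr 1
    push_cast; ring
  have e2 : (2 * π * a ^ 4) ^ (-(1:ℝ)/2) = (a ^ 2)⁻¹ * (2 * π * 1) ^ (-(1:ℝ)/2) := by
    rw [show 2 * π * a ^ 4 = a ^ 4 * (2 * π * 1) by ring,
      Real.mul_rpow (by positivity) (by positivity)]
    congr 1
    rw [← Real.rpow_natCast a 4, ← Real.rpow_mul ha.le, ← Real.rpow_natCast a 2,
      ← Real.rpow_neg ha.le]
    congr 1
    push_cast; ring
  have e3 : -‖x‖ ^ 2 / (2 * (a ^ 2 * s)) = -‖a⁻¹ • x‖ ^ 2 / (2 * s) := by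
    rw [norm_smul, norm_inv, Real.norm_of_nonneg ha.le]
    field_simp
  have e4 : -(a ^ 2 * s) ^ 2 / (2 * a ^ 4) = -s ^ 2 / (2 * 1) := by
    field_simp
  rw [e1, e2, e3, e4]
  field_simp

/-- The `L²` norm of the heat kernel. -/
lemma heatK_sq_lintegral (d : ℕ) (s : ℝ) (hs : 0 < s) :
    ∫⁻ x : EuclideanSpace ℝ (Fin d), ENNReal.ofReal (heatK d s x ^ 2) =
      ENNReal.ofReal ((2 * π) ^ (-(d:ℝ)) * π ^ ((d:ℝ)/2) * s ^ (-(d:ℝ)/2)) := by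
  have hI := GaussianFourier.integral_rexp_neg_mul_sq_norm (V := EuclideanSpace ℝ (Fin d))
    (b := s⁻¹) (by positivity)
  have hInt : Integrable (fun v : EuclideanSpace ℝ (Fin d) => rexp (-s⁻¹ * ‖v‖ ^ 2)) := by
    by_contra hc
    rw [integral_undef hc] at hI
    have : 0 < (π / s⁻¹) ^ (Module.finrank ℝ (EuclideanSpace ℝ (Fin d)) / 2 : ℝ) := by positivity
    linarith
  have hsq : ∀ x : EuclideanSpace ℝ (Fin d),
      heatK d s x ^ 2 = (2 * π * s) ^ (-(d:ℝ)) * rexp (-s⁻¹ * ‖x‖ ^ 2) := by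
    intro x
    rw [heatK, mul_pow, ← Real.rpow_natCast ((2 * π * s) ^ (-(d:ℝ)/2)) 2,
      ← Real.rpow_mul (by positivity), ← Real.exp_nat_mul]
    congr 2
    · push_cast; ring
    · push_cast; field_simp
  simp_rw [hsq]
  rw [← ofReal_integral_eq_lintegral_ofReal (hInt.const_mul _)
    (Filter.Eventually.of_forall fun x => by positivity), integral_const_mul, hI]
  congr 1
  rw [finrank_euclideanSpace, Fintype.card_fin, div_inv_eq_mul,
    Real.mul_rpow (by positivity) hs.le, Real.mul_rpow (by positivity) hs.le]
  have : s ^ (-(d:ℝ)/2) = s ^ (-(d:ℝ)) * s ^ ((d:ℝ)/2) := by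
    rw [← Real.rpow_add hs]; congr 1; ring
  rw [this]; ring

/-- The unscaled kernel as a Lebesgue integral. -/
noncomputable def auxL (d : ℕ) (x : EuclideanSpace ℝ (Fin d)) : ENNReal :=
  ∫⁻ s in Ioi (0:ℝ), ENNReal.ofReal
      (heatK d s x * ((2 * π * 1) ^ (-(1:ℝ)/2) * Real.exp (-s^2 / (2*1))))

lemma heatK_meas (d : ℕ) :
    Measurable (fun p : EuclideanSpace ℝ (Fin d) × ℝ => heatK d p.2 p.1) := by
  unfold heatK
  fun_prop

lemma heatK_meas' (d : ℕ) (x : EuclideanSpace ℝ (Fin d)) :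
    Measurable (fun s : ℝ => heatK d s x) := by
  unfold heatK
  fun_prop

lemma heatK_pos (d : ℕ) (s : ℝ) (hs : 0 < s) (x : EuclideanSpace ℝ (Fin d)) :
    0 < heatK d s x := by
  unfold heatK
  positivity

lemma auxL_meas (d : ℕ) : Measurable (auxL d) := by
  unfold auxL
  refine Measurable.lintegral_prod_right' (f := fun p : EuclideanSpace ℝ (Fin d) × ℝ =>
    ENNReal.ofReal (heatK d p.2 p.1 *
      ((2 * π * 1) ^ (-(1:ℝ)/2) * Real.exp (-p.2^2 / (2*1))))) ?_
  have := heatK_meas d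
  fun_prop

lemma btbmK_eq (d : ℕ) (x : EuclideanSpace ℝ (Fin d)) :
    btbmK d 1 x = 2 * (auxL d x).toReal := by
  unfold btbmK auxL
  rw [integral_eq_lintegral_of_nonneg_ae]
  · filter_upwards [ae_restrict_mem measurableSet_Ioi] with s hs
    have := heatK_pos d s hs x
    simp only [Pi.zero_apply]
    positivity
  · have := heatK_meas' d x
    exact Measurable.aestronglyMeasurable (by fun_prop)

lemma auxL_ne_zero (d : ℕ) (x : EuclideanSpace ℝ (Fin d)) : auxL d x ≠ 0 := by
  unfold auxL
  have hm := heatK_meas' d x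
  rw [Ne, lintegral_eq_zero_iff (by fun_prop)]
  intro h
  have h2 : ∀ᵐ s ∂(volume.restrict (Ioi (0:ℝ))), False := by
    filter_upwards [ae_restrict_mem measurableSet_Ioi, h] with s hs h
    have := heatK_pos d s hs x
    simp only [Pi.zero_apply, ENNReal.ofReal_eq_zero] at h
    exact absurd h (not_le.2 (by positivity))
  rw [Filter.eventually_false_iff_eq_bot, ae_eq_bot, Measure.restrict_eq_zero] at h2
  simp at h2

lemma auxL_sq_le (d : ℕ) (x : EuclideanSpace ℝ (Fin d)) :
    auxL d x ^ 2 ≤ (∫⁻ s in Ioi (0:ℝ), ENNReal.ofReal (heatK d s x ^ 2) *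
        ENNReal.ofReal (s ^ (3/4 : ℝ) * rexp (-(1/2) * s ^ 2))) *
      ∫⁻ s in Ioi (0:ℝ), ENNReal.ofReal
        (((2 * π * 1) ^ (-(1:ℝ)/2)) ^ 2 * (s ^ (-3/4 : ℝ) * rexp (-(1/2) * s ^ 2))) := by
  have hm := heatK_meas' d x
  have H := ENNReal.lintegral_mul_le_Lp_mul_Lq (volume.restrict (Ioi (0:ℝ)))
    (p := 2) (q := 2) Real.HolderConjugate.two_two
    (f := fun s => ENNReal.ofReal (heatK d s x * (s ^ (3/8 : ℝ) * rexp (-(1/4) * s ^ 2))))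
    (g := fun s => ENNReal.ofReal
      ((2 * π * 1) ^ (-(1:ℝ)/2) * (s ^ (-3/8 : ℝ) * rexp (-(1/4) * s ^ 2))))
    (by fun_prop) (by fun_prop)
  have e0 : auxL d x = ∫⁻ s in Ioi (0:ℝ), ((fun s => ENNReal.ofReal (heatK d s x * (s ^ (3/8 : ℝ) * rexp (-(1/4) * s ^ 2)))) * (fun s => ENNReal.ofReal
      ((2 * π * 1) ^ (-(1:ℝ)/2) * (s ^ (-3/8 : ℝ) * rexp (-(1/4) * s ^ 2))))) s := by
    unfold auxL
    refine setLIntegral_congr_fun measurableSet_Ioi fun s hs => ?_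
    have hs : 0 < s := hs
    have := heatK_pos d s hs x
    simp only [Pi.mul_apply]
    rw [← ENNReal.ofReal_mul (by positivity)]
    congr 1
    have e1 : s ^ (3/8 : ℝ) * s ^ (-3/8 : ℝ) = 1 := by
      rw [← Real.rpow_add hs]; norm_num
    have e2 : rexp (-s ^ 2 / (2 * 1)) = rexp (-(1/4) * s ^ 2) * rexp (-(1/4) * s ^ 2) := by
      rw [← Real.exp_add]; congr 1; ring
    rw [e2]
    linear_combination (-(heatK d s x * (2 * π * 1) ^ (-(1:ℝ)/2) * rexp (-(1/4) * s ^ 2) * rexp (-(1/4) * s ^ 2))) * e1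
  have e3 : ∀ s : ℝ, rexp (-(1/4) * s ^ 2) ^ 2 = rexp (-(1/2) * s ^ 2) := by
    intro s
    rw [← Real.exp_nat_mul]; congr 1; push_cast; ring
  have e4 : ∀ s : ℝ, 0 < s → ∀ b : ℝ, (s ^ b) ^ 2 = s ^ (2 * b) := by
    intro s hs b
    rw [← Real.rpow_natCast, ← Real.rpow_mul hs.le]; congr 1; push_cast; ring
  rw [← e0] at H
  have H2 := pow_le_pow_left' H 2
  refine H2.trans (le_of_eq ?_)
  rw [mul_pow]
  have r : ∀ y : ENNReal, (y ^ (1/2 : ℝ)) ^ 2 = y := by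
    intro y
    rw [← ENNReal.rpow_natCast, ← ENNReal.rpow_mul]; norm_num
  rw [r, r]
  congr 1
  · refine setLIntegral_congr_fun measurableSet_Ioi fun s hs => ?_
    have hs : 0 < s := hs
    have := heatK_pos d s hs x
    rw [ENNReal.rpow_two, ← ENNReal.ofReal_pow (by positivity),
      ← ENNReal.ofReal_mul (by positivity), mul_pow, mul_pow, e3, e4 s hs]
    norm_num
  · refine setLIntegral_congr_fun measurableSet_Ioi fun s hs => ?_
    have hs : 0 < s := hs
    rw [ENNReal.rpow_two, ← ENNReal.ofReal_pow (by positivity), mul_pow, mul_pow, e3, e4 s hs]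
    norm_num

lemma lint_fin (c b : ℝ) (hb : -1 < b) :
    ∫⁻ s in Ioi (0:ℝ), ENNReal.ofReal (c * (s ^ b * rexp (-(1/2) * s ^ 2))) ≠ ⊤ := by
  have h := ((integrableOn_rpow_mul_exp_neg_mul_sq (b := 1/2) (by norm_num) hb).const_mul c)
  exact h.lintegral_lt_top.ne

lemma auxL_sq_lintegral (d : ℕ) (hd : d ≤ 3) :
    ∫⁻ x, auxL d x ^ 2 ≠ ⊤ := by
  have hm := heatK_meas d
  have hd' : (d:ℝ) ≤ 3 := by exact_mod_cast hd
  refine ne_top_of_le_ne_top ?_ (lintegral_mono (auxL_sq_le d))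
  rw [lintegral_mul_const' _ _ (lint_fin _ _ (by norm_num))]
  refine ENNReal.mul_ne_top ?_ (lint_fin _ _ (by norm_num))
  rw [lintegral_lintegral_swap (Measurable.aemeasurable (by
    unfold Function.uncurry; fun_prop))]
  have e : ∫⁻ s in Ioi (0:ℝ), ∫⁻ x : EuclideanSpace ℝ (Fin d), ENNReal.ofReal (heatK d s x ^ 2) *
        ENNReal.ofReal (s ^ (3/4 : ℝ) * rexp (-(1/2) * s ^ 2)) =
      ∫⁻ s in Ioi (0:ℝ), ENNReal.ofReal (((2 * π) ^ (-(d:ℝ)) * π ^ ((d:ℝ)/2)) *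
        (s ^ (3/4 - (d:ℝ)/2) * rexp (-(1/2) * s ^ 2))) := by
    refine setLIntegral_congr_fun measurableSet_Ioi fun s hs => ?_
    have hs : 0 < s := hs
    rw [lintegral_mul_const' _ _ ENNReal.ofReal_ne_top, heatK_sq_lintegral d s hs,
      ← ENNReal.ofReal_mul (by positivity)]
    congr 1
    rw [show (3/4 - (d:ℝ)/2) = -(d:ℝ)/2 + 3/4 by ring, Real.rpow_add hs]
    ring
  rw [e]
  exact lint_fin _ _ (by linarith)

theorem btbmK_sq_integral (d : ℕ) (hd : d ∈ ({1, 2, 3} : Set ℕ)) :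
    ∃ C : ℝ, 0 < C ∧ ∀ t : ℝ, 0 < t →
      ∫ x : EuclideanSpace ℝ (Fin d), (btbmK d t x)^2 = C * t ^ (-(d : ℝ)/4) := by
  have hd3 : d ≤ 3 := by
    simp only [mem_insert_iff, mem_singleton_iff] at hd
    omega
  have hfin := auxL_sq_lintegral d hd3
  have hmeas : Measurable (fun x => auxL d x ^ 2) := (auxL_meas d).pow_const 2
  refine ⟨∫ x : EuclideanSpace ℝ (Fin d), (btbmK d 1 x)^2, ?_, ?_⟩
  · have e : ∀ x : EuclideanSpace ℝ (Fin d), (btbmK d 1 x)^2 = 4 * (auxL d x ^ 2).toReal := by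
      intro x
      rw [btbmK_eq, mul_pow, ENNReal.toReal_pow]; norm_num
    simp_rw [e]
    rw [integral_const_mul, integral_toReal hmeas.aemeasurable (ae_lt_top hmeas hfin)]
    refine mul_pos (by norm_num) (ENNReal.toReal_pos ?_ hfin)
    rw [Ne, lintegral_eq_zero_iff hmeas]
    intro h
    have h2 : ∀ᵐ x : EuclideanSpace ℝ (Fin d), False := by
      filter_upwards [h] with x hx
      exact auxL_ne_zero d x (by simpa using hx)
    rw [Filter.eventually_false_iff_eq_bot, ae_eq_bot] at h2
    exact NeZero.ne (volume : Measure (EuclideanSpace ℝ (Fin d))) h2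
  · intro t ht
    obtain ⟨a, ha, rfl⟩ : ∃ a : ℝ, 0 < a ∧ a ^ 4 = t := by
      refine ⟨t ^ (1/4 : ℝ), by positivity, ?_⟩
      rw [← Real.rpow_natCast, ← Real.rpow_mul ht.le]; norm_num
    simp_rw [btbmK_scale d a ha, mul_pow]
    rw [integral_const_mul, Measure.integral_comp_inv_smul volume (fun x => btbmK d 1 x ^ 2) a,
      finrank_euclideanSpace, Fintype.card_fin, abs_of_pos (by positivity), smul_eq_mul]
    have : (a ^ 4) ^ (-(d:ℝ)/4) = (a ^ d)⁻¹ := by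
      rw [← Real.rpow_natCast a 4, ← Real.rpow_mul ha.le, ← Real.rpow_natCast a d,
        ← Real.rpow_neg ha.le]
      congr 1
      push_cast; ring
    rw [this]
    field_simp
end

section
/- Let K^{BTBM}_t(x) be the 1-dimensional BTBM density. There is a constant C such that for all t > 0 and all z ∈ ℝ, ∫₀^t ∫_ℝ [K^{BTBM}_s(x) − K^{BTBM}_s(x+z)]² dx ds ≤ C |z|² t^{p} for some exponent p ∈ [0,1). -/
open Real MeasureTheory Set

noncomputable def btbmK1 (s x : ℝ) : ℝ :=
  2 * ∫ u in Ioi (0:ℝ),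
      (2 * π * u) ^ (-(1:ℝ)/2) * Real.exp (-x^2 / (2*u)) *
        ((2 * π * s) ^ (-(1:ℝ)/2) * Real.exp (-u^2 / (2*s)))


lemma gd (u z : ℝ) (hu : 0 < u) :
    ∫⁻ x : ℝ, ENNReal.ofReal ((Real.exp (-x^2/(2*u)) - Real.exp (-(x+z)^2/(2*u)))^2)
      ≤ ENNReal.ofReal (z^2 * (√π/2) * u^(-(1:ℝ)/2)) := by
  have hb : 0 < u⁻¹ := inv_pos.2 hu
  have e : ∀ x : ℝ, (Real.exp (-x^2/(2*u)) - Real.exp (-(x+z)^2/(2*u)))^2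
      = Real.exp (-u⁻¹ * x^2) + Real.exp (-u⁻¹ * (x+z)^2)
        - 2 * Real.exp (-z^2/(4*u)) * Real.exp (-u⁻¹ * (x+z/2)^2) := by
    intro x
    rw [mul_assoc, ← Real.exp_add, sub_sq, mul_assoc, ← Real.exp_add, ← Real.exp_nat_mul,
      ← Real.exp_nat_mul]
    have h1 : ((2:ℕ):ℝ) * (-x^2/(2*u)) = -u⁻¹ * x^2 := by push_cast; field_simp
    have h2 : ((2:ℕ):ℝ) * (-(x+z)^2/(2*u)) = -u⁻¹ * (x+z)^2 := by push_cast; field_simp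
    have h3 : -x^2/(2*u) + -(x+z)^2/(2*u) = -z^2/(4*u) + -u⁻¹ * (x+z/2)^2 := by
      field_simp; ring
    rw [h1, h2, h3]; ring
  have i0 : Integrable (fun x : ℝ => Real.exp (-u⁻¹ * x^2)) := integrable_exp_neg_mul_sq hb
  have i1 := i0.comp_add_right z
  have i2 := (i0.comp_add_right (z/2)).const_mul (2 * Real.exp (-z^2/(4*u)))
  have v0 := integral_gaussian u⁻¹
  have v1 : ∫ x : ℝ, Real.exp (-u⁻¹ * (x+z)^2) = √(π/u⁻¹) := by
    rw [← v0]; exact integral_add_right_eq_self (fun x : ℝ => Real.exp (-u⁻¹ * x^2)) z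
  have v2 : ∫ x : ℝ, Real.exp (-u⁻¹ * (x+z/2)^2) = √(π/u⁻¹) := by
    rw [← v0]; exact integral_add_right_eq_self (fun x : ℝ => Real.exp (-u⁻¹ * x^2)) (z/2)
  have ii : Integrable (fun x : ℝ => (Real.exp (-x^2/(2*u)) - Real.exp (-(x+z)^2/(2*u)))^2) := by
    simp_rw [e]; exact (i0.add i1).sub i2
  rw [← ofReal_integral_eq_lintegral_ofReal ii (ae_of_all _ fun x => sq_nonneg _)]
  apply ENNReal.ofReal_le_ofReal
  simp_rw [e]
  rw [integral_sub (by exact i0.add i1) i2, integral_add i0 i1, integral_const_mul, v0, v1, v2]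
  have h4 : 1 - Real.exp (-z^2/(4*u)) ≤ z^2/(4*u) := by
    have := Real.add_one_le_exp (-z^2/(4*u))
    rw [neg_div] at *; linarith
  have h5 : √(π/u⁻¹) = √π * √u := by rw [div_inv_eq_mul, Real.sqrt_mul pi_pos.le]
  have h6 : u^(-(1:ℝ)/2) = √u / u := by
    rw [neg_div, Real.rpow_neg hu.le, ← Real.sqrt_eq_rpow]
    have : 0 < √u := Real.sqrt_pos.2 hu
    field_simp; exact (Real.sq_sqrt hu.le).symm
  rw [h5, h6]
  calc _ = 2 * (√π * √u) * (1 - Real.exp (-z^2/(4*u))) := by ring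
    _ ≤ 2 * (√π * √u) * (z^2/(4*u)) := by gcongr
    _ = _ := by field_simp; ring

lemma Mint (s : ℝ) (hs : 0 < s) :
    ∫⁻ u in Ioi (0:ℝ), ENNReal.ofReal (u^(-(3:ℝ)/4) * ((2*π*s)^(-(1:ℝ)/2) * Real.exp (-u^2/(2*s))))
      = ENNReal.ofReal ((2*π*s)^(-(1:ℝ)/2) * ((1/(2*s))^(-(1:ℝ)/8) * (1/2) * Real.Gamma (1/8))) := by
  have hb : 0 < 1/(2*s) := by positivity
  have e : ∀ u : ℝ, u^(-(3:ℝ)/4) * ((2*π*s)^(-(1:ℝ)/2) * Real.exp (-u^2/(2*s)))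
     = (2*π*s)^(-(1:ℝ)/2) * (u^(-(3:ℝ)/4) * Real.exp (-(1/(2*s)) * u^2)) := by
    intro u
    have : -u^2/(2*s) = -(1/(2*s)) * u^2 := by ring
    rw [this]; ring
  have i0 := (integrableOn_rpow_mul_exp_neg_mul_sq hb (s := -(3:ℝ)/4) (by norm_num))
  have v := integral_rpow_mul_exp_neg_mul_rpow (p := 2) (q := -(3:ℝ)/4) two_pos (by norm_num) hb
  norm_num only [Real.rpow_two] at v
  simp_rw [e]
  rw [← ofReal_integral_eq_lintegral_ofReal (i0.const_mul _), integral_const_mul]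
  · congr 2
    norm_num only
    convert v using 3
  · filter_upwards [self_mem_ae_restrict measurableSet_Ioi] with u hu
    have : 0 < u := hu
    simp only [Pi.zero_apply]
    positivity

lemma Kint (s x : ℝ) (hs : 0 < s) : IntegrableOn (fun u : ℝ =>
      (2 * π * u) ^ (-(1:ℝ)/2) * Real.exp (-x^2 / (2*u)) *
        ((2 * π * s) ^ (-(1:ℝ)/2) * Real.exp (-u^2 / (2*s)))) (Ioi 0) := by
  have hb : 0 < 1/(2*s) := by positivity
  have i0 := (integrableOn_rpow_mul_exp_neg_mul_sq hb (s := -(1:ℝ)/2) (by norm_num)).const_mul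
    ((2*π)^(-(1:ℝ)/2) * (2 * π * s) ^ (-(1:ℝ)/2))
  refine Integrable.mono' i0 (by fun_prop) ?_
  filter_upwards [self_mem_ae_restrict measurableSet_Ioi] with u hu
  have hu : 0 < u := hu
  rw [Real.norm_of_nonneg (by positivity), Real.mul_rpow (by positivity) hu.le]
  have h1 : Real.exp (-x^2/(2*u)) ≤ 1 := by
    rw [Real.exp_le_one_iff, neg_div]
    have : 0 ≤ x^2/(2*u) := by positivity
    linarith
  have h2 : -u^2/(2*s) = -(1/(2*s)) * u^2 := by ring
  rw [h2]
  calc _ ≤ (2 * π) ^ (-(1:ℝ)/2) * u ^ (-(1:ℝ)/2) * 1 *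
        ((2 * π * s) ^ (-(1:ℝ)/2) * Real.exp (-(1/(2*s)) * u ^ 2)) := by gcongr
    _ = _ := by ring

lemma cs {α : Type*} [MeasurableSpace α] (μ : Measure α) (f g : α → ENNReal)
    (hf : AEMeasurable f μ) (hg : AEMeasurable g μ) :
    (∫⁻ a, f a * g a ∂μ)^2 ≤ (∫⁻ a, f a ^ 2 ∂μ) * ∫⁻ a, g a ^ 2 ∂μ := by
  have h := ENNReal.lintegral_mul_le_Lp_mul_Lq μ Real.HolderConjugate.two_two hf hg
  simp only [Pi.mul_apply, ENNReal.rpow_two] at h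
  refine (pow_le_pow_left' h 2).trans_eq ?_
  rw [mul_pow, ← ENNReal.rpow_two, ← ENNReal.rpow_two, ← ENNReal.rpow_mul, ← ENNReal.rpow_mul]
  norm_num

lemma fixed_s (s z : ℝ) (hs : 0 < s) :
    ∫ x : ℝ, (btbmK1 s x - btbmK1 s (x + z))^2
      ≤ 4 * ((2*π)⁻¹ * (√π/2)) * z^2 *
        ((2*π*s)^(-(1:ℝ)/2) * ((1/(2*s))^(-(1:ℝ)/8) * (1/2) * Real.Gamma (1/8)))^2 := by
  set M := (2*π*s)^(-(1:ℝ)/2) * ((1/(2*s))^(-(1:ℝ)/8) * (1/2) * Real.Gamma (1/8)) with hM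
  have hM0 : 0 ≤ M := by
    have := Real.Gamma_pos_of_pos (s := 1/8) (by norm_num)
    positivity
  set G : ℝ → ℝ := fun u => (2*π*s)^(-(1:ℝ)/2) * Real.exp (-u^2/(2*s)) with hG
  have hG0 : ∀ u, 0 ≤ G u := fun u => by positivity
  have hGm : Measurable G := by fun_prop
  set Δ : ℝ → ℝ → ℝ := fun u x => Real.exp (-x^2/(2*u)) - Real.exp (-(x+z)^2/(2*u)) with hΔ
  set f : ℝ → ENNReal := fun u => ENNReal.ofReal (u^(-(3:ℝ)/8) * √(G u)) with hf
  set g : ℝ → ℝ → ENNReal := fun x u =>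
    ENNReal.ofReal (u^((3:ℝ)/8) * (2*π*u)^(-(1:ℝ)/2) * √(G u) * |Δ u x|) with hg
  have hgm : Measurable (Function.uncurry g) := by
    simp only [hg, hΔ, Function.uncurry_def]
    fun_prop
  have hD : ∀ x, ‖btbmK1 s x - btbmK1 s (x+z)‖ₑ ≤ 2 * ∫⁻ u in Ioi (0:ℝ), f u * g x u := by
    intro x
    unfold btbmK1
    rw [← mul_sub, ← integral_sub (Kint s x hs) (Kint s (x+z) hs), enorm_mul]
    have h2 : ‖(2:ℝ)‖ₑ = 2 := by
      rw [Real.enorm_eq_ofReal_abs]; norm_num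
    rw [h2]
    gcongr
    refine (enorm_integral_le_lintegral_enorm _).trans_eq ?_
    refine setLIntegral_congr_fun measurableSet_Ioi fun u hu => ?_
    have hu : 0 < u := hu
    simp only [hf, hg]
    rw [← ENNReal.ofReal_mul (by positivity), Real.enorm_eq_ofReal_abs]
    congr 1
    have e : (2 * π * u) ^ (-(1:ℝ)/2) * Real.exp (-x^2 / (2*u)) * G u
      - (2 * π * u) ^ (-(1:ℝ)/2) * Real.exp (-(x+z)^2 / (2*u)) * G u
      = (2 * π * u) ^ (-(1:ℝ)/2) * G u * Δ u x := by simp only [hΔ]; ring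
    refine (congrArg abs e).trans ?_
    rw [abs_mul, abs_of_nonneg (a := (2 * π * u) ^ (-(1:ℝ)/2) * G u)
      (mul_nonneg (by positivity) (hG0 u))]
    have h3 : u^(-(3:ℝ)/8) * u^((3:ℝ)/8) = 1 := by
      rw [← Real.rpow_add hu]; norm_num
    have h4 := Real.mul_self_sqrt (hG0 u)
    calc _ = (u^(-(3:ℝ)/8) * u^((3:ℝ)/8)) * (2 * π * u) ^ (-(1:ℝ)/2) * (√(G u) * √(G u)) * |Δ u x| := by
          rw [h3, h4]; ring
      _ = _ := by ring
  have hA : ∫⁻ u in Ioi (0:ℝ), f u ^ 2 = ENNReal.ofReal M := by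
    rw [hM, ← Mint s hs]
    refine setLIntegral_congr_fun measurableSet_Ioi fun u hu => ?_
    have hu : 0 < u := hu
    simp only [hf]
    rw [← ENNReal.ofReal_pow (by positivity), mul_pow, Real.sq_sqrt (hG0 u), ← Real.rpow_mul_natCast hu.le]
    norm_num [hG]
  have hB : ∫⁻ x : ℝ, ∫⁻ u in Ioi (0:ℝ), g x u ^ 2
      ≤ ENNReal.ofReal (((2*π)⁻¹ * (√π/2)) * z^2) * ENNReal.ofReal M := by
    rw [lintegral_lintegral_swap (hgm.pow_const 2).aemeasurable, hM, ← Mint s hs,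
      ← lintegral_const_mul _ (by fun_prop)]
    refine setLIntegral_mono' measurableSet_Ioi fun u hu => ?_
    have hu : 0 < u := hu
    have e : ∀ x, g x u ^ 2 = ENNReal.ofReal (u^((3:ℝ)/4) * (2*π*u)⁻¹ * G u) *
        ENNReal.ofReal ((Δ u x)^2) := by
      intro x
      have := hG0 u
      simp only [hg]
      rw [← ENNReal.ofReal_mul (by positivity), ← ENNReal.ofReal_pow (by positivity), mul_pow,
        mul_pow, mul_pow, Real.sq_sqrt (hG0 u), sq_abs, ← Real.rpow_mul_natCast hu.le,
        ← Real.rpow_mul_natCast (by positivity), ← Real.rpow_neg_one (2*π*u)]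
      norm_num
    simp_rw [e]
    rw [lintegral_const_mul _ (by fun_prop)]
    refine (mul_le_mul_right (gd u z hu) _).trans_eq ?_
    have := hG0 u
    rw [← ENNReal.ofReal_mul (by positivity), ← ENNReal.ofReal_mul (by positivity)]
    congr 1
    have h5 : u^(-(3:ℝ)/4) = u^((3:ℝ)/4) * u⁻¹ * u^(-(1:ℝ)/2) := by
      rw [← Real.rpow_neg_one u, ← Real.rpow_add hu, ← Real.rpow_add hu]; norm_num
    rw [h5, mul_inv]
    simp only [hG]; ring
  have key : ‖∫ x : ℝ, (btbmK1 s x - btbmK1 s (x + z))^2‖ₑ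
      ≤ ENNReal.ofReal (4 * ((2*π)⁻¹ * (√π/2)) * z^2 * M^2) := by
    calc _ ≤ ∫⁻ x : ℝ, ‖(btbmK1 s x - btbmK1 s (x + z))^2‖ₑ := enorm_integral_le_lintegral_enorm _
      _ ≤ ∫⁻ x : ℝ, 4 * ENNReal.ofReal M * ∫⁻ u in Ioi (0:ℝ), g x u ^ 2 := by
          refine lintegral_mono fun x => ?_
          rw [enorm_pow]
          refine (pow_le_pow_left' (hD x) 2).trans ?_
          rw [mul_pow, mul_assoc, ← hA]
          have h4 : (2:ENNReal)^2 = 4 := by norm_num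
          rw [h4]
          gcongr
          exact cs _ _ _ (by fun_prop) (hgm.of_uncurry_left (x := x)).aemeasurable
      _ = 4 * ENNReal.ofReal M * ∫⁻ x : ℝ, ∫⁻ u in Ioi (0:ℝ), g x u ^ 2 := by
          rw [lintegral_const_mul]
          exact (hgm.pow_const 2).lintegral_prod_right'
      _ ≤ 4 * ENNReal.ofReal M * (ENNReal.ofReal (((2*π)⁻¹ * (√π/2)) * z^2) * ENNReal.ofReal M) := by
          gcongr
      _ = _ := by
          have h4 : (4:ENNReal) = ENNReal.ofReal 4 := by norm_num
          rw [h4, ← ENNReal.ofReal_mul (by positivity), ← ENNReal.ofReal_mul (by positivity),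
            ← ENNReal.ofReal_mul (by positivity)]
          congr 1; ring
  rw [Real.enorm_eq_ofReal_abs, ENNReal.ofReal_le_ofReal_iff (by positivity)] at key
  exact (le_abs_self _).trans key

theorem btbmK1_spatial_regularity :
    ∃ C : ℝ, 0 < C ∧ ∃ p : ℝ, 0 ≤ p ∧ p < 1 ∧ ∀ t z : ℝ, 0 < t →
      ∫ s in Ioo (0:ℝ) t, ∫ x : ℝ, (btbmK1 s x - btbmK1 s (x + z))^2
        ≤ C * |z|^2 * t ^ p := by
  have hΓ := Real.Gamma_pos_of_pos (s := 1/8) (by norm_num)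
  set c : ℝ := 4 * ((2*π)⁻¹ * (√π/2)) *
    ((2*π)^(-(1:ℝ)/2) * ((1/2)^(-(1:ℝ)/8) * (1/2) * Real.Gamma (1/8)))^2 with hc
  have hc0 : 0 < c := by positivity
  refine ⟨4 * c, by positivity, 1/4, by norm_num, by norm_num, fun t z ht => ?_⟩
  have hi : IntegrableOn (fun s : ℝ => s^(-(3:ℝ)/4)) (Ioo 0 t) :=
    (intervalIntegral.integrableOn_Ioo_rpow_iff ht).2 (by norm_num)
  have hv : ∫ s in Ioo (0:ℝ) t, s^(-(3:ℝ)/4) = 4 * t^((1:ℝ)/4) := by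
    rw [← integral_Ioc_eq_integral_Ioo, ← intervalIntegral.integral_of_le ht.le,
      integral_rpow (Or.inl (by norm_num))]
    norm_num
    ring
  calc _ ≤ ∫ s in Ioo (0:ℝ) t, c * z^2 * s^(-(3:ℝ)/4) := by
        refine integral_mono_of_nonneg
          (ae_of_all _ fun s => integral_nonneg fun x => sq_nonneg _) (hi.const_mul _) ?_
        filter_upwards [self_mem_ae_restrict measurableSet_Ioo] with s hs
        have hs : 0 < s := hs.1
        refine (fixed_s s z hs).trans_eq ?_
        have h1 : 1/(2*s) = (1/2) * s⁻¹ := by field_simp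
        have h2 : s^(-(3:ℝ)/4) = (s^(-(1:ℝ)/2) * (s⁻¹)^(-(1:ℝ)/8))^2 := by
          rw [← Real.rpow_neg_one s, ← Real.rpow_mul hs.le, ← Real.rpow_add hs,
            ← Real.rpow_mul_natCast hs.le]
          norm_num
        rw [h1, h2, Real.mul_rpow (x := 2*π) (by positivity) hs.le,
          Real.mul_rpow (x := 1/2) (by positivity) (by positivity), hc]
        ring
    _ = _ := by
        rw [integral_const_mul, hv, sq_abs]; ring
end
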